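/- Each Henneberg I step exactly doubles the count given by the separated mixed volume: if a new vertex v_{n+1} is connected to vertices v_r, v_q and the substituted system gains the equations s_{n+1} − x_{n+1}² − y_{n+1}² = 0, s_r + s_{n+1} − 2x_r x_{n+1} − 2y_r y_{n+1} − l² = 0, s_q + s_{n+1} − 2x_q x_{n+1} − 2y_q y_{n+1} − l'² = 0, then the mixed volume of the projections of these three Newton polytopes to the coordinates (x_{n+1}, y_{n+1}, s_{n+1}) equals 2. Concretely, MV_3(conv{2ξ_1, 2ξ_2, ξ_3}, conv{0, ξ_1, ξ_2, ξ_3}, conv{0, ξ_1, ξ_2, ξ_3}) = 2. -/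

import Mathlib

open MeasureTheory Pointwise

/-- Mixed volume of `k` convex bodies in `ℝ^k`, via the standard
inclusion-exclusion formula over Minkowski sums. -/
noncomputable def mixedVolume {k : ℕ} (P : Fin k → Set (Fin k → ℝ)) : ℝ :=
  ∑ S ∈ Finset.univ.powerset.filter (fun S : Finset (Fin k) => S.Nonempty),
    (-1 : ℝ) ^ (k - S.card) * (volume (∑ i ∈ S, P i)).toReal

/-- A polytope is the convex hull of finitely many points. -/
def IsPolytope {E : Type*} [AddCommMonoid E] [Module ℝ E] (P : Set E) : Prop :=
  ∃ V : Finset E, P = convexHull ℝ (V : Set E)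

/-!
Let `Δ = conv{0, ξ_1, …, ξ_{n+1}}` and let `F` be the simplex with all vertices `M ξ_j` except
one, which is lowered to `ρ M ξ_i`, where `0 ≤ ρ ≤ 1`. On every line parallel to `ξ_i`, the sets
`F + l Δ` and `(M + l) Δ \ M Δ` cut out intervals of the same length, so by Cavalieri's principle
`vol (F + l Δ) = ((M + l)^(n+1) - M^(n+1)) / (n+1)!`, whatever the slope `ρ`.
Inclusion–exclusion expresses `MV(F, Δ, …, Δ)` as the `n`-th finite difference at `0` of
`l ↦ vol (F + l Δ) - vol (l Δ)`, a polynomial with leading term `M l^n / n!`; hence the mixed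
volume is `M`. The Henneberg I step is `n = 2`, `M = 2`, `ρ = 1/2`.
-/

open Set
open scoped Nat

/-! ### Inclusion–exclusion as a finite difference -/

theorem mixedVolume_update_const {n : ℕ} (P Q : Set (Fin (n + 1) → ℝ)) (i : Fin (n + 1)) :
    mixedVolume (Function.update (fun _ => P) i Q) =
      ∑ k ∈ Finset.range (n + 1), (-1) ^ (n - k) * (n.choose k : ℝ) *
        (volume.real (Q + k • P) - volume.real (k • P)) := by
  set B : Fin (n + 1) → Set (Fin (n + 1) → ℝ) := Function.update (fun _ => P) i Q with hB
  set others : Finset (Fin (n + 1)) := Finset.univ.erase i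
  have hi : i ∉ others := Finset.notMem_erase i _
  have hcard : others.card = n := by simp [others]
  have sum_without {S : Finset (Fin (n + 1))} (hS : S ⊆ others) :
      ∑ j ∈ S, B j = S.card • P := by
    simp [hB, Finset.sum_update_of_notMem (fun h => hi (hS h))]
  have sum_with {S : Finset (Fin (n + 1))} (hS : S ⊆ others) :
      ∑ j ∈ insert i S, B j = Q + S.card • P := by
    rw [Finset.sum_insert fun h => hi (hS h), sum_without hS, hB, Function.update_self]
  calc mixedVolume B
      = ∑ S ∈ Finset.univ.powerset,
          (-1 : ℝ) ^ (n + 1 - S.card) * volume.real (∑ j ∈ S, B j) := by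
        refine Finset.sum_filter_of_ne fun S _ hS => ?_
        contrapose! hS
        simp [hS, ← Set.singleton_zero]
    _ = ∑ S ∈ others.powerset, (-1 : ℝ) ^ (n - S.card) *
          (volume.real (Q + S.card • P) - volume.real (S.card • P)) := by
        rw [← Finset.insert_erase (Finset.mem_univ i), Finset.sum_powerset_insert hi,
          ← Finset.sum_add_distrib]
        refine Finset.sum_congr rfl fun S hS => ?_
        rw [Finset.mem_powerset] at hS
        have hle : S.card ≤ n := by simpa [hcard] using Finset.card_le_card hS
        rw [sum_without hS, sum_with hS, Finset.card_insert_of_notMem fun h => hi (hS h),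
          Nat.succ_sub hle, Nat.add_sub_add_right, pow_succ]
        ring
    _ = _ := by
        rw [Finset.sum_powerset_apply_card
          (fun k => (-1 : ℝ) ^ (n - k) * (volume.real (Q + k • P) - volume.real (k • P))), hcard]
        refine Finset.sum_congr rfl fun k _ => ?_
        rw [nsmul_eq_mul]
        ring

theorem fwdDiff_iter_add_pow_succ_sub {R : Type*} [CommRing R] {n : ℕ} (hn : n ≠ 0) (a : R) :
    (fwdDiff 1)^[n] (fun r : R => (r + a) ^ (n + 1) - a ^ (n + 1) - r ^ (n + 1)) =
      fun _ => ((n + 1)! : R) * a := by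
  have expand : (fun r : R => (r + a) ^ (n + 1) - a ^ (n + 1) - r ^ (n + 1)) =
      (fun r => ∑ k ∈ Finset.range n, (a ^ (n + 1 - k) * (n + 1).choose k) * r ^ k) +
        (-a ^ (n + 1)) • (fun r => r ^ 0) + ((n + 1) * a) • (fun r => r ^ n) := by
    funext r
    have terms : ∀ k ∈ Finset.range n, r ^ k * a ^ (n + 1 - k) * ((n + 1).choose k : R) =
        (a ^ (n + 1 - k) * (n + 1).choose k) * r ^ k := fun k _ => by ring
    rw [add_pow, Finset.sum_range_succ, Finset.sum_range_succ, Finset.sum_congr rfl terms]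
    simp only [Nat.add_sub_cancel_left, Nat.choose_succ_self_right, Nat.choose_self, Nat.sub_self,
      Pi.add_apply, Pi.smul_apply, smul_eq_mul]
    push_cast
    ring
  rw [expand, fwdDiff_iter_add, fwdDiff_iter_add, fwdDiff_iter_const_smul,
    fwdDiff_iter_const_smul, fwdDiff_iter_sum_mul_pow_eq_zero,
    fwdDiff_iter_pow_eq_zero_of_lt (Nat.pos_of_ne_zero hn), fwdDiff_iter_eq_factorial]
  funext r
  simp only [smul_zero, add_zero, zero_add, Pi.smul_apply, Pi.natCast_apply, smul_eq_mul,
    Nat.factorial_succ]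
  push_cast
  ring

theorem sum_alternating_choose_mul_add_pow_succ_sub {R : Type*} [CommRing R] {n : ℕ} (hn : n ≠ 0)
    (a : R) :
    ∑ k ∈ Finset.range (n + 1), (-1) ^ (n - k) * (n.choose k : R) *
      (((k : R) + a) ^ (n + 1) - a ^ (n + 1) - (k : R) ^ (n + 1)) = ((n + 1)! : R) * a := by
  simpa [zsmul_eq_mul] using
    (fwdDiff_iter_eq_sum_shift 1 _ n 0).symm.trans
      (congrFun (fwdDiff_iter_add_pow_succ_sub hn a) 0)

/-! ### Slicing along a coordinate -/

section Slicing

theorem insertNth_mem_add {α : Type*} [Add α] {n : ℕ} {i : Fin (n + 1)}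
    {A B : Set (Fin (n + 1) → α)} {z : α} {y : Fin n → α} :
    (i.insertNth z y : Fin (n + 1) → α) ∈ A + B ↔
      ∃ v a w b, (i.insertNth v a : Fin (n + 1) → α) ∈ A ∧
        (i.insertNth w b : Fin (n + 1) → α) ∈ B ∧ v + w = z ∧ a + b = y := by
  constructor
  · rintro ⟨f, hf, g, hg, hfg⟩
    obtain ⟨rfl, rfl⟩ := Fin.eq_insertNth_iff.1 hfg
    exact ⟨f i, i.removeNth f, g i, i.removeNth g, by simpa, by simpa, rfl, rfl⟩
  · rintro ⟨v, a, w, b, hA, hB, rfl, rfl⟩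
    exact ⟨_, hA, _, hB, (Fin.insertNth_add (α := fun _ => α) i v w a b).symm⟩

variable {α : Type*} [MeasureSpace α] [SigmaFinite (volume : Measure α)] {n : ℕ}

theorem measurePreserving_uncurry_insertNth (i : Fin (n + 1)) :
    MeasurePreserving (fun p : α × (Fin n → α) => (i.insertNth p.1 p.2 : Fin (n + 1) → α)) :=
  (volume_preserving_piFinSuccAbove (fun _ => α) i).symm

theorem volume_eq_lintegral_insertNth (i : Fin (n + 1)) {s : Set (Fin (n + 1) → α)}
    (hs : MeasurableSet s) :
    volume s = ∫⁻ z, volume {y : Fin n → α | i.insertNth z y ∈ s} := by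
  have h := measurePreserving_uncurry_insertNth (α := α) i
  rw [← h.measure_preimage hs.nullMeasurableSet, Measure.volume_eq_prod,
    Measure.prod_apply (h.measurable hs)]
  rfl

theorem volume_eq_of_forall_volume_insertNth_eq (i : Fin (n + 1)) {s t : Set (Fin (n + 1) → α)}
    (hs : MeasurableSet s) (ht : MeasurableSet t)
    (h : ∀ y : Fin n → α, volume {z | i.insertNth z y ∈ s} = volume {z | i.insertNth z y ∈ t}) :
    volume s = volume t := by
  have hi := measurePreserving_uncurry_insertNth (α := α) i
  rw [← hi.measure_preimage hs.nullMeasurableSet, ← hi.measure_preimage ht.nullMeasurableSet,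
    Measure.volume_eq_prod, Measure.prod_apply_symm (hi.measurable hs),
    Measure.prod_apply_symm (hi.measurable ht)]
  exact lintegral_congr h

end Slicing

/-! ### Corner simplices -/

section CornerSimplex

variable {ι : Type*} [Fintype ι] {s t : ℝ}

variable (ι) in
/-- The simplex `t · conv{0, ξ_i : i ∈ ι}` in the corner of the positive orthant, given by its
facet inequalities; it is empty for `t < 0`. -/
def cornerSimplex (t : ℝ) : Set (ι → ℝ) := {x | 0 ≤ x ∧ ∑ i, x i ≤ t}

theorem isClosed_cornerSimplex : IsClosed (cornerSimplex ι t) :=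
  isClosed_Ici.inter <|
    isClosed_le (f := fun x : ι → ℝ => ∑ i, x i) (by fun_prop) continuous_const

theorem measurableSet_cornerSimplex : MeasurableSet (cornerSimplex ι t) :=
  isClosed_cornerSimplex.measurableSet

theorem convex_cornerSimplex : Convex ℝ (cornerSimplex ι t) :=
  (convex_Ici 0).inter <| convex_halfSpace_le (f := fun x : ι → ℝ => ∑ i, x i)
    ⟨fun _ _ => Finset.sum_add_distrib, fun _ _ => (Finset.mul_sum _ _ _).symm⟩ t

theorem exists_nonneg_le_sum_eq {x : ι → ℝ} (hx : 0 ≤ x) (ht : 0 ≤ t) (htx : t ≤ ∑ i, x i) :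
    ∃ a, 0 ≤ a ∧ a ≤ x ∧ ∑ i, a i = t := by
  rcases ht.eq_or_lt with rfl | ht
  · exact ⟨0, le_rfl, hx, by simp⟩
  have hsum : 0 < ∑ i, x i := ht.trans_le htx
  refine ⟨(t / ∑ i, x i) • x, smul_nonneg (by positivity) hx,
    smul_le_of_le_one_left hx ((div_le_one hsum).2 htx), ?_⟩
  simp only [Pi.smul_apply, smul_eq_mul, ← Finset.mul_sum]
  exact div_mul_cancel₀ t hsum.ne'

theorem cornerSimplex_add (hs : 0 ≤ s) (ht : 0 ≤ t) :
    cornerSimplex ι s + cornerSimplex ι t = cornerSimplex ι (s + t) := by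
  ext x
  constructor
  · rintro ⟨a, ⟨ha, has⟩, b, ⟨hb, hbt⟩, rfl⟩
    exact ⟨add_nonneg ha hb, by simpa [Finset.sum_add_distrib] using add_le_add has hbt⟩
  · rintro ⟨hx, hxst⟩
    rcases le_total s (∑ i, x i) with h | h
    · obtain ⟨a, ha, hax, hsum⟩ := exists_nonneg_le_sum_eq hx hs h
      refine ⟨a, ⟨ha, hsum.le⟩, x - a, ⟨sub_nonneg.2 hax, ?_⟩, add_sub_cancel _ _⟩
      simp only [Pi.sub_apply, Finset.sum_sub_distrib]
      linarith
    · exact ⟨x, ⟨hx, h⟩, 0, ⟨le_rfl, by simpa using ht⟩, add_zero x⟩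

theorem nsmul_cornerSimplex_one (k : ℕ) : k • cornerSimplex ι 1 = cornerSimplex ι k := by
  induction k with
  | zero =>
    ext x
    simp only [zero_nsmul, Set.mem_zero, cornerSimplex, Nat.cast_zero, mem_ofPred_eq]
    constructor
    · rintro rfl
      simp
    · rintro ⟨hx, hsum⟩
      exact (Fintype.sum_eq_zero_iff_of_nonneg hx).1
        (hsum.antisymm (Finset.sum_nonneg fun i _ => hx i))
  | succ k ih => rw [succ_nsmul, ih, cornerSimplex_add k.cast_nonneg zero_le_one, Nat.cast_succ]

theorem convexHull_zero_single_one [DecidableEq ι] :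
    convexHull ℝ (insert 0 (range fun i : ι => Pi.single i (1 : ℝ))) = cornerSimplex ι 1 := by
  apply Subset.antisymm
  · refine convexHull_min (insert_subset ?_ (range_subset_iff.2 fun i => ?_)) convex_cornerSimplex
    · exact ⟨le_rfl, by simp⟩
    · exact ⟨Pi.single_nonneg.2 zero_le_one, by simp⟩
  · rintro x ⟨hx, hsum⟩
    refine mem_convexHull_of_exists_fintype
      (fun o : Option ι => o.elim (1 - ∑ i, x i) x) (fun o => o.elim 0 fun i => Pi.single i 1)
      ?_ ?_ ?_ ?_
    · rintro (_ | i)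
      exacts [sub_nonneg.2 hsum, hx i]
    · simp
    · rintro (_ | i) <;> simp
    · ext j
      simp [Pi.single_apply]

end CornerSimplex

section Slices

variable {n : ℕ} {t : ℝ}

theorem insertNth_mem_cornerSimplex {i : Fin (n + 1)} {z : ℝ} {y : Fin n → ℝ} :
    (i.insertNth z y : Fin (n + 1) → ℝ) ∈ cornerSimplex (Fin (n + 1)) t ↔
      0 ≤ z ∧ y ∈ cornerSimplex (Fin n) (t - z) := by
  simp only [cornerSimplex, mem_ofPred_eq, Fin.le_insertNth_iff, Fin.sum_insertNth,
    le_sub_iff_add_le', Pi.zero_apply, and_assoc]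
  rfl

theorem lintegral_Icc_ofReal_sub_pow_div_factorial (ht : 0 ≤ t) :
    ∫⁻ z in Icc 0 t, ENNReal.ofReal ((t - z) ^ n / n !) =
      ENNReal.ofReal (t ^ (n + 1) / (n + 1)!) := by
  rw [← ofReal_integral_eq_lintegral_ofReal]
  · rw [integral_Icc_eq_integral_Ioc, ← intervalIntegral.integral_of_le ht,
      intervalIntegral.integral_comp_sub_left (fun z => z ^ n / (n ! : ℝ)) t]
    simp only [sub_self, sub_zero, intervalIntegral.integral_div, integral_pow, Nat.factorial_succ,
      Nat.cast_mul, Nat.cast_succ, zero_pow n.succ_ne_zero, div_div]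
  · exact (by fun_prop : Continuous fun z : ℝ => (t - z) ^ n / (n ! : ℝ)).integrableOn_Icc
  · refine (ae_restrict_iff' measurableSet_Icc).2 (Filter.Eventually.of_forall fun z hz => ?_)
    exact div_nonneg (pow_nonneg (sub_nonneg.2 hz.2) n) (Nat.cast_nonneg _)

theorem volume_cornerSimplex (ht : 0 ≤ t) :
    volume (cornerSimplex (Fin n) t) = ENNReal.ofReal (t ^ n / n !) := by
  induction n generalizing t with
  | zero =>
    have : cornerSimplex (Fin 0) t = univ :=
      eq_univ_of_forall fun x => ⟨by simp, by simpa⟩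
    simp [this, volume_pi]
  | succ n ih =>
    have slice (z : ℝ) :
        volume {y : Fin n → ℝ | Fin.insertNth 0 z y ∈ cornerSimplex (Fin (n + 1)) t} =
          (Icc 0 t).indicator (fun z => ENNReal.ofReal ((t - z) ^ n / n !)) z := by
      simp only [insertNth_mem_cornerSimplex]
      by_cases hz : z ∈ Icc 0 t
      · simp [hz, hz.1, ← ih (sub_nonneg.2 hz.2)]
      · rw [indicator_of_notMem hz]
        convert! measure_empty (μ := volume)
        refine eq_empty_of_forall_notMem fun y ⟨hz0, hy, hsum⟩ => hz ⟨hz0, ?_⟩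
        linarith [Finset.sum_nonneg fun j (_ : j ∈ Finset.univ) => hy j]
    rw [volume_eq_lintegral_insertNth 0 measurableSet_cornerSimplex]
    simp_rw [slice]
    rw [lintegral_indicator measurableSet_Icc, lintegral_Icc_ofReal_sub_pow_div_factorial ht]

theorem volumeReal_cornerSimplex (ht : 0 ≤ t) :
    volume.real (cornerSimplex (Fin n) t) = t ^ n / n ! := by
  rw [measureReal_def, volume_cornerSimplex ht, ENNReal.toReal_ofReal (by positivity)]

end Slices

/-! ### The tilted facet -/

section TiltedFacet

variable {n : ℕ} {i : Fin (n + 1)} {M ρ l : ℝ}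

/-- For `0 < M` and `0 ≤ ρ`, the simplex with vertices `ρ M ξ_i` and `M ξ_j`, `j ≠ i`, encoded as
the graph of an affine function over the corner simplex of size `M` in the coordinates `j ≠ i`. -/
def tiltedFacet (i : Fin (n + 1)) (M ρ : ℝ) : Set (Fin (n + 1) → ℝ) :=
  {x | i.removeNth x ∈ cornerSimplex (Fin n) M ∧ x i = ρ * (M - ∑ j, i.removeNth x j)}

theorem insertNth_mem_tiltedFacet {z : ℝ} {y : Fin n → ℝ} :
    (i.insertNth z y : Fin (n + 1) → ℝ) ∈ tiltedFacet i M ρ ↔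
      y ∈ cornerSimplex (Fin n) M ∧ z = ρ * (M - ∑ j, y j) := by
  simp [tiltedFacet]

theorem convex_tiltedFacet : Convex ℝ (tiltedFacet i M ρ) := by
  rintro x ⟨hx, hxi⟩ y ⟨hy, hyi⟩ a b ha hb hab
  refine ⟨convex_cornerSimplex hx hy ha hb hab, ?_⟩
  simp only [Fin.removeNth, Pi.add_apply, Pi.smul_apply, smul_eq_mul, Finset.sum_add_distrib,
    ← Finset.mul_sum] at hxi hyi ⊢
  linear_combination a * hxi + b * hyi + ρ * M * hab

theorem convexHull_single_update (hM : 0 < M) :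
    convexHull ℝ (range fun k => Pi.single k (Function.update (fun _ => M) i (ρ * M) k)) =
      tiltedFacet i M ρ := by
  apply Subset.antisymm
  · refine convexHull_min (range_subset_iff.2 (i.forall_iff_succAbove.2 ⟨?_, fun j => ?_⟩))
      convex_tiltedFacet
    · simp [tiltedFacet, cornerSimplex, Fin.removeNth, Pi.le_def, hM.le]
    · have : i.removeNth (Pi.single (i.succAbove j) M : Fin (n + 1) → ℝ) = Pi.single j M := by
        ext k
        simp [Fin.removeNth, Pi.single_apply]
      simp [tiltedFacet, cornerSimplex, this, hM.le]
  · rintro x ⟨⟨hx, hsum⟩, hxi⟩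
    refine mem_convexHull_of_exists_fintype
      (i.insertNth (1 - (∑ j, i.removeNth x j) / M) fun j => i.removeNth x j / M)
      (fun k => Pi.single k (Function.update (fun _ => M) i (ρ * M) k)) ?_ ?_ mem_range_self ?_
    · refine i.forall_iff_succAbove.2 ⟨?_, fun j => ?_⟩
      · simpa using (div_le_one hM).2 hsum
      · simpa using div_nonneg (hx j) hM.le
    · simp [Fin.sum_insertNth, ← Finset.sum_div]
    · ext k
      simp only [Finset.sum_apply, Pi.smul_apply, smul_eq_mul, Pi.single_apply, mul_ite, mul_zero,
        Finset.sum_ite_eq, Finset.mem_univ, if_true]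
      induction k using i.succAboveCases with
      | x =>
        simp only [Fin.insertNth_apply_same, Function.update_self, hxi]
        field_simp
      | p j => simp [Fin.removeNth, hM.ne']

theorem isCompact_tiltedFacet (hM : 0 < M) : IsCompact (tiltedFacet i M ρ) :=
  convexHull_single_update hM ▸ (finite_range _).isCompact_convexHull (𝕜 := ℝ)

theorem insertNth_mem_tiltedFacet_add_cornerSimplex (hM : 0 ≤ M) (hρ₀ : 0 ≤ ρ) (hρ₁ : ρ ≤ 1)
    {z : ℝ} {y : Fin n → ℝ} :
    (i.insertNth z y : Fin (n + 1) → ℝ) ∈ tiltedFacet i M ρ + cornerSimplex (Fin (n + 1)) l ↔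
      0 ≤ y ∧ 0 ≤ z ∧ ρ * (M - ∑ j, y j) ≤ z ∧ z ≤ ρ * (M - ∑ j, y j) + l ∧
        z + ∑ j, y j ≤ M + l := by
  simp only [insertNth_mem_add, insertNth_mem_tiltedFacet, insertNth_mem_cornerSimplex]
  constructor
  · rintro ⟨_, a, w, b, ⟨⟨ha, haM⟩, rfl⟩, ⟨hw, hb, hbl⟩, rfl, rfl⟩
    have hb_sum : 0 ≤ ∑ j, b j := Finset.sum_nonneg fun j _ => hb j
    have hρb : ρ * ∑ j, b j ≤ ∑ j, b j := mul_le_of_le_one_left hb_sum hρ₁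
    have hρa : ρ * (M - ∑ j, a j) ≤ M - ∑ j, a j := mul_le_of_le_one_left (sub_nonneg.2 haM) hρ₁
    have hρa₀ : 0 ≤ ρ * (M - ∑ j, a j) := mul_nonneg hρ₀ (sub_nonneg.2 haM)
    have hρb₀ : 0 ≤ ρ * ∑ j, b j := mul_nonneg hρ₀ hb_sum
    simp only [Pi.add_apply, Finset.sum_add_distrib]
    refine ⟨add_nonneg ha hb, ?_, ?_, ?_, ?_⟩ <;> linarith
  · rintro ⟨hy, hz, hle, hge, hsum⟩
    rcases le_total M (∑ j, y j) with h | h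
    · obtain ⟨a, ha, hay, haM⟩ := exists_nonneg_le_sum_eq hy hM h
      refine ⟨0, a, z, y - a, ⟨⟨ha, haM.le⟩, by simp [haM]⟩, ⟨hz, sub_nonneg.2 hay, ?_⟩,
        zero_add z, add_sub_cancel _ _⟩
      simp only [Pi.sub_apply, Finset.sum_sub_distrib]
      linarith
    · refine ⟨ρ * (M - ∑ j, y j), y, z - ρ * (M - ∑ j, y j), 0, ⟨⟨hy, h⟩, rfl⟩,
        ⟨sub_nonneg.2 hle, le_rfl, ?_⟩, add_sub_cancel _ _, add_zero y⟩
      simpa using by linarith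

theorem volume_slice_tiltedFacet_add_cornerSimplex (hM : 0 ≤ M) (hρ₀ : 0 ≤ ρ) (hρ₁ : ρ ≤ 1)
    (y : Fin n → ℝ) :
    volume {z | (i.insertNth z y : Fin (n + 1) → ℝ) ∈
        tiltedFacet i M ρ + cornerSimplex (Fin (n + 1)) l} =
      volume {z | (i.insertNth z y : Fin (n + 1) → ℝ) ∈
        cornerSimplex (Fin (n + 1)) (M + l) \ cornerSimplex (Fin (n + 1)) M} := by
  simp only [insertNth_mem_tiltedFacet_add_cornerSimplex hM hρ₀ hρ₁, Set.mem_sdiff,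
    insertNth_mem_cornerSimplex]
  simp only [cornerSimplex, mem_ofPred_eq]
  by_cases hy : 0 ≤ y
  swap
  · simp [hy]
  simp only [hy, true_and]
  set σ := ∑ j, y j
  rcases le_or_gt σ M with h | h
  · have hρσ₀ : 0 ≤ ρ * (M - σ) := mul_nonneg hρ₀ (sub_nonneg.2 h)
    have hρσ : ρ * (M - σ) ≤ M - σ := mul_le_of_le_one_left (sub_nonneg.2 h) hρ₁
    have tilted_slice : {z | 0 ≤ z ∧ ρ * (M - σ) ≤ z ∧ z ≤ ρ * (M - σ) + l ∧ z + σ ≤ M + l} =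
        Icc (ρ * (M - σ)) (ρ * (M - σ) + l) := by
      ext z
      simp only [mem_ofPred_eq, mem_Icc]
      grind
    have corner_slice : {z | (0 ≤ z ∧ σ ≤ M + l - z) ∧ ¬(0 ≤ z ∧ σ ≤ M - z)} =
        Ioc (M - σ) (M - σ + l) := by
      ext z
      simp only [mem_ofPred_eq, mem_Ioc]
      grind
    rw [tilted_slice, corner_slice, Real.volume_Icc, Real.volume_Ioc, add_sub_cancel_left,
      add_sub_cancel_left]
  · have hρσ₀ : ρ * (M - σ) ≤ 0 := mul_nonpos_of_nonneg_of_nonpos hρ₀ (sub_nonpos.2 h.le)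
    have hρσ : M - σ ≤ ρ * (M - σ) := by nlinarith
    congr 1
    ext z
    simp only [mem_ofPred_eq]
    grind

theorem volumeReal_tiltedFacet_add_cornerSimplex (hM : 0 < M) (hρ₀ : 0 ≤ ρ) (hρ₁ : ρ ≤ 1)
    (hl : 0 ≤ l) :
    volume.real (tiltedFacet i M ρ + cornerSimplex (Fin (n + 1)) l) =
      ((l + M) ^ (n + 1) - M ^ (n + 1)) / (n + 1)! := by
  have hsub : cornerSimplex (Fin (n + 1)) M ⊆ cornerSimplex (Fin (n + 1)) (M + l) :=
    fun x hx => ⟨hx.1, hx.2.trans (le_add_of_nonneg_right hl)⟩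
  have hfinite : volume (cornerSimplex (Fin (n + 1)) (M + l)) ≠ ⊤ := by
    rw [volume_cornerSimplex (add_nonneg hM.le hl)]
    exact ENNReal.ofReal_ne_top
  rw [measureReal_def, volume_eq_of_forall_volume_insertNth_eq i
    (isClosed_cornerSimplex.add_left_of_isCompact (isCompact_tiltedFacet hM)).measurableSet
    (measurableSet_cornerSimplex.diff measurableSet_cornerSimplex)
    (volume_slice_tiltedFacet_add_cornerSimplex hM.le hρ₀ hρ₁), ← measureReal_def,
    measureReal_sdiff hsub measurableSet_cornerSimplex hfinite,
    volumeReal_cornerSimplex (add_nonneg hM.le hl),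
    volumeReal_cornerSimplex hM.le, add_comm M l, sub_div]

end TiltedFacet

/-! ### The polytopes of a Henneberg I step -/

theorem range_fin_three {α : Type*} (f : Fin 3 → α) : range f = {f 0, f 1, f 2} := by
  ext
  simp [Fin.exists_fin_succ, eq_comm]

theorem range_single_update_two (a b : ℝ) :
    range (fun k : Fin 3 => Pi.single k (Function.update (fun _ => a) 2 b k)) =
      {![a, 0, 0], ![0, a, 0], ![0, 0, b]} := by
  rw [range_fin_three]
  congr! <;> ext k <;> fin_cases k <;> simp

theorem insert_zero_range_single_one :
    insert 0 (range fun k : Fin 3 => Pi.single k (1 : ℝ)) =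
      {![0, 0, 0], ![1, 0, 0], ![0, 1, 0], ![0, 0, 1]} := by
  rw [range_fin_three]
  congr! <;> ext k <;> fin_cases k <;> simp

theorem update_const_zero_fin_three {α : Type*} (P Q : α) :
    Function.update (fun _ : Fin 3 => P) 0 Q = ![Q, P, P] := by
  ext k
  fin_cases k <;> rfl

theorem mixedVolume_hennebergI_projection_general {n : ℕ} (hn : n ≠ 0) (i j : Fin (n + 1))
    {M b : ℝ} (hM : 0 < M) (hb : 0 ≤ b) (hbM : b ≤ M) :
    mixedVolume
      (Function.update
        (fun _ => convexHull ℝ (insert 0 (range fun k : Fin (n + 1) => Pi.single k (1 : ℝ)))) j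
        (convexHull ℝ (range fun k => Pi.single k (Function.update (fun _ => M) i b k)))) = M := by
  obtain ⟨ρ, rfl⟩ : ∃ ρ, b = ρ * M := ⟨b / M, (div_mul_cancel₀ b hM.ne').symm⟩
  have hρ₀ : 0 ≤ ρ := nonneg_of_mul_nonneg_left hb hM
  have hρ₁ : ρ ≤ 1 := by simpa [hM] using hbM
  rw [convexHull_zero_single_one, convexHull_single_update hM, mixedVolume_update_const]
  have hfac : ((n + 1)! : ℝ) ≠ 0 := by positivity
  calc _ = ∑ k ∈ Finset.range (n + 1), (-1) ^ (n - k) * (n.choose k : ℝ) *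
        ((k + M) ^ (n + 1) - M ^ (n + 1) - k ^ (n + 1)) / (n + 1)! := by
        refine Finset.sum_congr rfl fun k _ => ?_
        rw [nsmul_cornerSimplex_one, volumeReal_cornerSimplex k.cast_nonneg,
          volumeReal_tiltedFacet_add_cornerSimplex hM hρ₀ hρ₁ k.cast_nonneg]
        ring
    _ = M := by
        rw [← Finset.sum_div, sum_alternating_choose_mul_add_pow_succ_sub hn,
          mul_div_cancel_left₀ M hfac]

/-- in a Henneberg I step the mixed volume of the projections of
the three new Newton polytopes to the coordinates `(x_{n+1}, y_{n+1}, s_{n+1})`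
equals `2`:  `MV₃(conv{2ξ₁, 2ξ₂, ξ₃}, conv{0,ξ₁,ξ₂,ξ₃}, conv{0,ξ₁,ξ₂,ξ₃}) = 2`. -/
theorem mixedVolume_hennebergI_projection :
    mixedVolume
      ![convexHull ℝ ({![2,0,0], ![0,2,0], ![0,0,1]} : Set (Fin 3 → ℝ)),
        convexHull ℝ ({![0,0,0], ![1,0,0], ![0,1,0], ![0,0,1]} : Set (Fin 3 → ℝ)),
        convexHull ℝ ({![0,0,0], ![1,0,0], ![0,1,0], ![0,0,1]} : Set (Fin 3 → ℝ))] = 2 := by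
  rw [← insert_zero_range_single_one, ← range_single_update_two, ← update_const_zero_fin_three]
  exact mixedVolume_hennebergI_projection_general two_ne_zero 2 0 two_pos zero_le_one one_le_two
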